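/- arXiv:2310.04537 — 6 statements merged into one kernel-verified Lean document; each statement's English description precedes it below -/
import Mathlib

section
/- Let λ₁, λ₂, λ₃, λ₄, z₁₂, z₁₃ be nonzero complex numbers. Define 𝔪ₚ = λₚ + λₚ⁻¹ for p = 1,2,3,4, and define 𝔱₁ = λ₁λ₂/z₁₂ + (−z₁₂z₁₃ + z₁₂ + λ₂²z₁₃)/(λ₁λ₂) + λ₄z₁₂(z₁₃−1)z₁₃/(λ₁²λ₃) + λ₄z₁₃/λ₃, 𝔱₂ = λ₁(z₁₂−1)/(λ₄z₁₂z₁₃) + λ₃(z₁₂(z₁₃−1)+1)/(λ₂z₁₃) − λ₄z₁₂(z₁₃−1)/λ₁, and 𝔱₃ = −λ₂λ₁²(z₁₂−1)/(λ₄z₁₂²z₁₃) + λ₂/(λ₄z₁₂) + λ₁(λ₃²(z₁₂−1)+z₁₃)/(λ₃z₁₂z₁₃) + z₁₃/(λ₁λ₃). Then 𝔱₁𝔱₂𝔱₃ + 𝔱₁² + 𝔱₂² + 𝔱₃² + 𝔪₁𝔪₂𝔪₃𝔪₄ + 𝔪₁² + 𝔪₂² + 𝔪₃² + 𝔪₄²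 − (𝔪₁𝔪₂ + 𝔪₃𝔪₄)·𝔱₁ − (𝔪₂𝔪₃ + 𝔪₁𝔪₄)·𝔱₂ − (𝔪₁𝔪₃ + 𝔪₂𝔪₄)·𝔱₃ − 4 = 0. -/
/-!
Fricke's identity says that, for `A B C` in `SL₂`, the numbers `tr (ABC)` and `tr (ACB)` are the two
roots of a monic quadratic whose coefficients are polynomials in the traces of `A`, `B`, `C`, `AB`,
`BC` and `AC`. Its vanishing at `tr (ABC)` is the relation `P = 0`, so it is enough to exhibit
explicit holonomies around the first three holes whose traces are the given Laurent expressions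
and whose product has trace `λ₄ + λ₄⁻¹`.

The holonomies are found by letting the one around hole `p` be `hₚ v = λₚ⁻¹ v + φₚ(v) vₚ`, where
the covector `φₚ` satisfies `φₚ(vₚ) = λₚ - λₚ⁻¹`, so that `vₚ` is a `λₚ`-eigenvector. Then
`tr (hₚ h_q) = λₚ / λ_q + λ_q / λₚ + φₚ(v_q) φ_q(vₚ)`, and indeed `𝔱₁ - λ₁ / λ₂ - λ₂ / λ₁` and
its two analogues each split into two factors. Taking `v₁, v₂, v₃` to be `(1, 0)`, `(0, 1)` and
`(1, -1)`, the remaining matrix entries are read off from these factors.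
-/

section Fricke

variable {R : Type*} [CommRing R] (A B C : Matrix (Fin 2) (Fin 2) R)

theorem mul_add_mul_swap_fin_two :
    B * C + C * B = B.trace • C + C.trace • B + ((B * C).trace - B.trace * C.trace) • 1 := by
  simp only [← Matrix.ext_iff, Fin.forall_fin_two, Matrix.add_apply, Matrix.smul_apply,
    Matrix.mul_apply, Matrix.trace_fin_two, Fin.sum_univ_two, smul_eq_mul, Matrix.one_apply_eq,
    Matrix.one_apply_ne zero_ne_one, Matrix.one_apply_ne one_ne_zero]
  refine ⟨⟨?_, ?_⟩, ?_, ?_⟩ <;> ring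

theorem trace_mul_mul_add_trace_mul_mul_swap_fin_two :
    (A * B * C).trace + (A * C * B).trace =
      B.trace * (A * C).trace + C.trace * (A * B).trace
        + ((B * C).trace - B.trace * C.trace) * A.trace := by
  have h := congrArg (fun X => (A * X).trace) (mul_add_mul_swap_fin_two B C)
  simpa only [mul_add, Matrix.trace_add, Matrix.mul_smul, Matrix.trace_smul, smul_eq_mul, mul_one,
    ← mul_assoc] using h

theorem trace_mul_mul_mul_trace_mul_mul_swap_fin_two :
    (A * B * C).trace * (A * C * B).trace =
      (A * B).trace * (B * C).trace * (A * C).trace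
        + C.det * (A * B).trace ^ 2 + A.det * (B * C).trace ^ 2 + B.det * (A * C).trace ^ 2
        + B.det * C.det * A.trace ^ 2 + A.det * C.det * B.trace ^ 2 + A.det * B.det * C.trace ^ 2
        - C.det * (A.trace * B.trace * (A * B).trace)
        - A.det * (B.trace * C.trace * (B * C).trace)
        - B.det * (A.trace * C.trace * (A * C).trace)
        - 4 * (A.det * B.det * C.det) := by
  simp only [Matrix.trace_fin_two, Matrix.det_fin_two, Matrix.mul_apply, Fin.sum_univ_two]
  ring

variable {A B C}

theorem fricke_relation_of_det_eq_one (hA : A.det = 1) (hB : B.det = 1) (hC : C.det = 1) :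
    (A * B).trace * (B * C).trace * (A * C).trace
      + (A * B).trace ^ 2 + (B * C).trace ^ 2 + (A * C).trace ^ 2
      + A.trace * B.trace * C.trace * (A * B * C).trace
      + A.trace ^ 2 + B.trace ^ 2 + C.trace ^ 2 + (A * B * C).trace ^ 2
      - (A.trace * B.trace + C.trace * (A * B * C).trace) * (A * B).trace
      - (B.trace * C.trace + A.trace * (A * B * C).trace) * (B * C).trace
      - (A.trace * C.trace + B.trace * (A * B * C).trace) * (A * C).trace - 4 = 0 := by
  have hsum := trace_mul_mul_add_trace_mul_mul_swap_fin_two A B C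
  have hprod := trace_mul_mul_mul_trace_mul_mul_swap_fin_two A B C
  rw [hA, hB, hC] at hprod
  linear_combination (A * B * C).trace * hsum - hprod

end Fricke

namespace FourHoledSphere

variable {K : Type*} [Field K] (l1 l2 l3 l4 z12 z13 : K)

/-- The holonomy around the first hole in Fock–Goncharov coordinates, in a basis where its
`l1`-eigenline is spanned by `(1, 0)`. -/
def holonomy₁ : Matrix (Fin 2) (Fin 2) K :=
  !![l1, l1 / z12 - (1 - z13) / l1; 0, l1⁻¹]

/-- The holonomy around the second hole in Fock–Goncharov coordinates, in the basis of `holonomy₁`;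
its `l2`-eigenline is spanned by `(0, 1)`. -/
def holonomy₂ : Matrix (Fin 2) (Fin 2) K :=
  !![l2⁻¹, 0; l2 - z12 / l2 + l4 * z12 * z13 / (l1 * l3), l2]

/-- The holonomy around the third hole in Fock–Goncharov coordinates, in the basis of `holonomy₁`;
its `l3`-eigenline is spanned by `(1, -1)`. -/
def holonomy₃ : Matrix (Fin 2) (Fin 2) K :=
  let w := l3 / z13 - l1 * l2 / (l4 * z12 * z13)
  !![w, w - l3; l3⁻¹ - w, l3⁻¹ + l3 - w]

theorem trace_holonomy₁ : (holonomy₁ l1 z12 z13).trace = l1 + l1⁻¹ := by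
  simp [holonomy₁, Matrix.trace_fin_two]

theorem trace_holonomy₂ : (holonomy₂ l1 l2 l3 l4 z12 z13).trace = l2 + l2⁻¹ := by
  simp [holonomy₂, Matrix.trace_fin_two, add_comm]

theorem trace_holonomy₃ : (holonomy₃ l1 l2 l3 l4 z12 z13).trace = l3 + l3⁻¹ := by
  simp [holonomy₃, Matrix.trace_fin_two, add_comm]

variable {l1 l2 l3 l4 z12 z13}

theorem det_holonomy₁ (hl1 : l1 ≠ 0) : (holonomy₁ l1 z12 z13).det = 1 := by
  simp [holonomy₁, Matrix.det_fin_two, hl1]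

theorem det_holonomy₂ (hl2 : l2 ≠ 0) : (holonomy₂ l1 l2 l3 l4 z12 z13).det = 1 := by
  simp [holonomy₂, Matrix.det_fin_two, hl2]

theorem det_holonomy₃ (hl3 : l3 ≠ 0) : (holonomy₃ l1 l2 l3 l4 z12 z13).det = 1 := by
  simp only [holonomy₃, Matrix.det_fin_two_of]
  linear_combination mul_inv_cancel₀ hl3

theorem trace_holonomy₁_mul_holonomy₂ (hl1 : l1 ≠ 0) (hl2 : l2 ≠ 0) (hz12 : z12 ≠ 0) :
    (holonomy₁ l1 z12 z13 * holonomy₂ l1 l2 l3 l4 z12 z13).trace =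
      l1 * l2 / z12 + (-(z12 * z13) + z12 + l2 ^ 2 * z13) / (l1 * l2)
        + l4 * z12 * (z13 - 1) * z13 / (l1 ^ 2 * l3) + l4 * z13 / l3 := by
  simp only [holonomy₁, holonomy₂, Matrix.mul_fin_two, Matrix.trace_fin_two_of]
  field_simp
  ring

theorem trace_holonomy₂_mul_holonomy₃ (hl1 : l1 ≠ 0) (hl2 : l2 ≠ 0) (hl3 : l3 ≠ 0) (hl4 : l4 ≠ 0)
    (hz12 : z12 ≠ 0) (hz13 : z13 ≠ 0) :
    (holonomy₂ l1 l2 l3 l4 z12 z13 * holonomy₃ l1 l2 l3 l4 z12 z13).trace =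
      l1 * (z12 - 1) / (l4 * z12 * z13) + l3 * (z12 * (z13 - 1) + 1) / (l2 * z13)
        - l4 * z12 * (z13 - 1) / l1 := by
  simp only [holonomy₂, holonomy₃, Matrix.mul_fin_two, Matrix.trace_fin_two_of]
  field_simp
  ring

theorem trace_holonomy₁_mul_holonomy₃ (hl1 : l1 ≠ 0) (hl3 : l3 ≠ 0) (hz12 : z12 ≠ 0)
    (hz13 : z13 ≠ 0) :
    (holonomy₁ l1 z12 z13 * holonomy₃ l1 l2 l3 l4 z12 z13).trace =
      -(l2 * l1 ^ 2 * (z12 - 1)) / (l4 * z12 ^ 2 * z13) + l2 / (l4 * z12)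
        + l1 * (l3 ^ 2 * (z12 - 1) + z13) / (l3 * z12 * z13) + z13 / (l1 * l3) := by
  simp only [holonomy₁, holonomy₃, Matrix.mul_fin_two, Matrix.trace_fin_two_of]
  field_simp
  ring

theorem trace_holonomy₁_mul_holonomy₂_mul_holonomy₃ (hl1 : l1 ≠ 0) (hl2 : l2 ≠ 0) (hl3 : l3 ≠ 0)
    (hl4 : l4 ≠ 0) (hz12 : z12 ≠ 0) (hz13 : z13 ≠ 0) :
    (holonomy₁ l1 z12 z13 * holonomy₂ l1 l2 l3 l4 z12 z13
      * holonomy₃ l1 l2 l3 l4 z12 z13).trace = l4 + l4⁻¹ := by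
  simp only [holonomy₁, holonomy₂, holonomy₃, Matrix.mul_fin_two, Matrix.trace_fin_two_of]
  field_simp
  ring

end FourHoledSphere

open FourHoledSphere in
theorem trace_coordinates_satisfy_polynomial_general {K : Type*} [Field K]
    (l1 l2 l3 l4 z12 z13 : K)
    (hl1 : l1 ≠ 0) (hl2 : l2 ≠ 0) (hl3 : l3 ≠ 0) (hl4 : l4 ≠ 0)
    (hz12 : z12 ≠ 0) (hz13 : z13 ≠ 0)
    (m1 m2 m3 m4 t1 t2 t3 : K)
    (hm1 : m1 = l1 + l1⁻¹) (hm2 : m2 = l2 + l2⁻¹)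
    (hm3 : m3 = l3 + l3⁻¹) (hm4 : m4 = l4 + l4⁻¹)
    (ht1 : t1 = l1 * l2 / z12 + (-(z12 * z13) + z12 + l2 ^ 2 * z13) / (l1 * l2)
      + l4 * z12 * (z13 - 1) * z13 / (l1 ^ 2 * l3) + l4 * z13 / l3)
    (ht2 : t2 = l1 * (z12 - 1) / (l4 * z12 * z13) + l3 * (z12 * (z13 - 1) + 1) / (l2 * z13)
      - l4 * z12 * (z13 - 1) / l1)
    (ht3 : t3 = -(l2 * l1 ^ 2 * (z12 - 1)) / (l4 * z12 ^ 2 * z13) + l2 / (l4 * z12)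
      + l1 * (l3 ^ 2 * (z12 - 1) + z13) / (l3 * z12 * z13) + z13 / (l1 * l3)) :
    t1 * t2 * t3 + t1 ^ 2 + t2 ^ 2 + t3 ^ 2 + m1 * m2 * m3 * m4
      + m1 ^ 2 + m2 ^ 2 + m3 ^ 2 + m4 ^ 2
      - (m1 * m2 + m3 * m4) * t1 - (m2 * m3 + m1 * m4) * t2 - (m1 * m3 + m2 * m4) * t3
      - 4 = 0 := by
  have hfricke := fricke_relation_of_det_eq_one (A := holonomy₁ l1 z12 z13)
    (B := holonomy₂ l1 l2 l3 l4 z12 z13) (C := holonomy₃ l1 l2 l3 l4 z12 z13)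
    (det_holonomy₁ hl1) (det_holonomy₂ hl2) (det_holonomy₃ hl3)
  rwa [trace_holonomy₁_mul_holonomy₂_mul_holonomy₃ hl1 hl2 hl3 hl4 hz12 hz13, ← hm4,
    trace_holonomy₁, ← hm1, trace_holonomy₂, ← hm2, trace_holonomy₃, ← hm3,
    trace_holonomy₁_mul_holonomy₂ hl1 hl2 hz12, ← ht1,
    trace_holonomy₂_mul_holonomy₃ hl1 hl2 hl3 hl4 hz12 hz13, ← ht2,
    trace_holonomy₁_mul_holonomy₃ hl1 hl3 hz12 hz13, ← ht3] at hfricke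

/-- The trace coordinates `𝔱₁ = tr(h₁₂)`, `𝔱₂ = tr(h₂₃)`, `𝔱₃ = tr(h₁₃)` of a flat `SL(2,ℂ)`
connection on the 4-holed sphere, expressed through the Fock–Goncharov coordinates
`z₁₂, z₁₃` and the hole eigenvalues `λ₁,…,λ₄`, together with `𝔪ₚ = λₚ + λₚ⁻¹`, satisfy the
defining polynomial relation `P = 0` of the trace-coordinate ring. -/
theorem trace_coordinates_satisfy_polynomial (l1 l2 l3 l4 z12 z13 : ℂ)
    (hl1 : l1 ≠ 0) (hl2 : l2 ≠ 0) (hl3 : l3 ≠ 0) (hl4 : l4 ≠ 0)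
    (hz12 : z12 ≠ 0) (hz13 : z13 ≠ 0)
    (m1 m2 m3 m4 t1 t2 t3 : ℂ)
    (hm1 : m1 = l1 + l1⁻¹) (hm2 : m2 = l2 + l2⁻¹)
    (hm3 : m3 = l3 + l3⁻¹) (hm4 : m4 = l4 + l4⁻¹)
    (ht1 : t1 = l1 * l2 / z12 + (-(z12 * z13) + z12 + l2 ^ 2 * z13) / (l1 * l2)
      + l4 * z12 * (z13 - 1) * z13 / (l1 ^ 2 * l3) + l4 * z13 / l3)
    (ht2 : t2 = l1 * (z12 - 1) / (l4 * z12 * z13) + l3 * (z12 * (z13 - 1) + 1) / (l2 * z13)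
      - l4 * z12 * (z13 - 1) / l1)
    (ht3 : t3 = -(l2 * l1 ^ 2 * (z12 - 1)) / (l4 * z12 ^ 2 * z13) + l2 / (l4 * z12)
      + l1 * (l3 ^ 2 * (z12 - 1) + z13) / (l3 * z12 * z13) + z13 / (l1 * l3)) :
    t1 * t2 * t3 + t1 ^ 2 + t2 ^ 2 + t3 ^ 2 + m1 * m2 * m3 * m4
      + m1 ^ 2 + m2 ^ 2 + m3 ^ 2 + m4 ^ 2
      - (m1 * m2 + m3 * m4) * t1 - (m2 * m3 + m1 * m4) * t2 - (m1 * m3 + m2 * m4) * t3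
      - 4 = 0 :=
  trace_coordinates_satisfy_polynomial_general l1 l2 l3 l4 z12 z13 hl1 hl2 hl3 hl4 hz12 hz13
    m1 m2 m3 m4 t1 t2 t3 hm1 hm2 hm3 hm4 ht1 ht2 ht3
end

section
/- Over ℂ, let M(w) = [[1,0],[0,−w]], U = [[1,0],[1,1]], L = [[1,0],[−1,1]], S = [[0,1],[−1,0]] (so S⁻¹ = [[0,−1],[1,0]]), as 2×2 matrices. Given nonzero complex numbers z₁₂, z₁₃, z₁₄, z₂₃, z₂₄, z₃₄, define h₁ = M(z₁₃)·U·M(z₁₄)·U·M(z₁₂)·U, h₂ = L·S·M(z₁₂)·U·M(z₂₄)·U·M(z₂₃)·S·L·S, h₃ = S⁻¹·U·M(z₂₃)·U·M(z₃₄)·U·M(z₁₃)·S, h₄ = M(z₁₃)·U·S⁻¹·U·M(z₃₄)·U·M(z₂₄)·U·M(z₁₄)·S⁻¹·L·M(z₁₃⁻¹). Then h₁·h₂·h₃·h₄ = −(z₁₂·z₁₃·z₁₄·z₂₃·z₂₄·z₃₄)·I, where I is the 2×2 identity matrix. In particular h₁·h₂·h₃·h₄ is a scalar multiple of the identity, so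 the closure constraint h₁h₂h₃h₄ = 1 holds in PSL(2,ℂ), and h₁·h₂·h₃·h₄ = I exactly when z₁₂z₁₃z₁₄z₂₃z₂₄z₃₄ = −1. -/
open Matrix Complex

/-- The snake-rule elementary matrix `M(w) = [[1,0],[0,−w]]`. -/
noncomputable def Mdiag (w : ℂ) : Matrix (Fin 2) (Fin 2) ℂ := !![1, 0; 0, -w]

/-- The snake-rule elementary matrix `U = [[1,0],[1,1]]`. -/
noncomputable def Umat : Matrix (Fin 2) (Fin 2) ℂ := !![1, 0; 1, 1]

/-- The snake-rule elementary matrix `L = [[1,0],[−1,1]]`. -/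
noncomputable def Lmat : Matrix (Fin 2) (Fin 2) ℂ := !![1, 0; -1, 1]

/-- The snake-rule elementary matrix `S = [[0,1],[−1,0]]`. -/
noncomputable def Smat : Matrix (Fin 2) (Fin 2) ℂ := !![0, 1; -1, 0]

/-!
The moves `U`, `S` satisfy `S² = -1` and `(U S)³ = -1`, hence the triangle relation
`U S⁻¹ U = S U⁻¹ S`, and crossing an edge back and forth gives `M(w) S M(w) = w S⁻¹`. In the word
`h₁h₂h₃h₄` these two relations and free cancellation remove the edges in the order
`12, 23, 13, 34, 24, 14`, each contributing its coordinate as a scalar, until only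
`M(z₁₃) U S⁻² U⁻¹ M(z₁₃)⁻¹ = -1` is left.
-/

/-- An abstract form of the snake rule, with values in an `R`-algebra `A`. A snake moves by rotating
inside a triangle (`U`), reversing its direction (`S`), and crossing an edge with coordinate `w`
(`M w`); the matrix `L` of the concrete rule is `U⁻¹`. The laws are those of the standard generators
of `SL(2, ℤ)`, the statement that crossing an edge, turning around and crossing back is a reversal
up to the scalar `w`, and the invertibility of the crossing when its coordinate is invertible. -/
structure SnakeRule (R A : Type*) [CommRing R] [Ring A] [Algebra R A] where
  U : Aˣ
  S : Aˣ
  M : R → A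
  S_sq : S ^ 2 = -1
  U_mul_S_cube : (U * S) ^ 3 = -1
  M_mul_S_mul_M (w : R) : M w * S * M w = w • (↑S⁻¹ : A)
  M_mul_M_inv (w : Rˣ) : M w * M ↑w⁻¹ = 1

namespace SnakeRule

variable {R A : Type*} [CommRing R] [Ring A] [Algebra R A] (F : SnakeRule R A)

theorem inv_S : F.S⁻¹ = -F.S :=
  inv_eq_of_mul_eq_one_right (by rw [mul_neg, ← sq, F.S_sq, neg_neg])

theorem inv_S_mul_inv_S : (↑F.S⁻¹ * ↑F.S⁻¹ : A) = -1 := by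
  rw [← Units.val_mul, F.inv_S, neg_mul_neg, ← sq, F.S_sq, Units.val_neg, Units.val_one]

theorem U_mul_inv_S_mul_U : F.U * F.S⁻¹ * F.U = F.S * F.U⁻¹ * F.S := by
  have hcube : F.U * F.S * F.U * (F.S * F.U * F.S) = -1 := by
    simpa only [pow_three, mul_assoc] using F.U_mul_S_cube
  calc F.U * F.S⁻¹ * F.U = -(F.U * F.S * F.U) := by rw [inv_S, mul_neg, neg_mul]
    _ = (F.S * F.U * F.S)⁻¹ := by
      rw [eq_inv_iff_mul_eq_one, neg_mul, hcube, neg_neg]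
    _ = F.S⁻¹ * F.U⁻¹ * F.S⁻¹ := by simp only [_root_.mul_inv_rev, mul_assoc]
    _ = F.S * F.U⁻¹ * F.S := by rw [inv_S, neg_mul, neg_mul_neg]

theorem mul_U_mul_inv_S_mul_U (x : A) :
    x * F.U * ↑F.S⁻¹ * F.U = x * F.S * ↑F.U⁻¹ * F.S := by
  simpa only [Units.val_mul, mul_assoc] using
    congrArg (fun u : Aˣ => x * (u : A)) F.U_mul_inv_S_mul_U

theorem mul_M_mul_S_mul_M (x : A) (w : R) :
    x * F.M w * F.S * F.M w = w • (x * ↑F.S⁻¹) := by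
  rw [← mul_smul_comm, ← F.M_mul_S_mul_M]
  simp only [mul_assoc]

/-- The holonomy `h₁` around the first hole of the 4-holed sphere. -/
def holonomy₁ (z12 z13 z14 : R) : A :=
  F.M z13 * F.U * F.M z14 * F.U * F.M z12 * F.U

/-- The holonomy `h₂` around the second hole of the 4-holed sphere. -/
def holonomy₂ (z12 z23 z24 : R) : A :=
  ↑F.U⁻¹ * F.S * F.M z12 * F.U * F.M z24 * F.U * F.M z23 * F.S * ↑F.U⁻¹ * F.S

/-- The holonomy `h₃` around the third hole of the 4-holed sphere. -/
def holonomy₃ (z13 z23 z34 : R) : A :=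
  ↑F.S⁻¹ * F.U * F.M z23 * F.U * F.M z34 * F.U * F.M z13 * F.S

/-- The holonomy `h₄` around the fourth hole of the 4-holed sphere. The coordinate `z13` is a unit
because the path returns to the base snake through the inverse crossing `M z13⁻¹`. -/
def holonomy₄ (z13 : Rˣ) (z14 z24 z34 : R) : A :=
  F.M z13 * F.U * ↑F.S⁻¹ * F.U * F.M z34 * F.U * F.M z24 * F.U * F.M z14 * ↑F.S⁻¹ * ↑F.U⁻¹ *
    F.M ↑z13⁻¹

theorem holonomy₁_mul_holonomy₂ (z12 z13 z14 z23 z24 : R) :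
    F.holonomy₁ z12 z13 z14 * F.holonomy₂ z12 z23 z24 =
      z12 • (F.M z13 * F.U * F.M z14 * F.S * ↑F.U⁻¹ * F.S * F.M z24 * F.U * F.M z23 *
        F.S * ↑F.U⁻¹ * F.S) := by
  simp only [holonomy₁, holonomy₂, ← mul_assoc, Units.mul_inv_cancel_right, mul_M_mul_S_mul_M,
    smul_mul_assoc, mul_U_mul_inv_S_mul_U]

theorem holonomy₁_mul_holonomy₂_mul_holonomy₃ (z12 z13 z14 z23 z24 z34 : R) :
    F.holonomy₁ z12 z13 z14 * F.holonomy₂ z12 z23 z24 * F.holonomy₃ z13 z23 z34 =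
      (z12 * z23) • (F.M z13 * F.U * F.M z14 * F.S * ↑F.U⁻¹ * F.S * F.M z24 * F.S * ↑F.U⁻¹ * F.S *
        F.M z34 * F.U * F.M z13 * F.S) := by
  simp only [holonomy₁_mul_holonomy₂, holonomy₃, ← mul_assoc, smul_mul_assoc,
    Units.mul_inv_cancel_right, Units.inv_mul_cancel_right, mul_M_mul_S_mul_M,
    mul_U_mul_inv_S_mul_U, smul_smul]

theorem M_mul_U_mul_inv_S_sq_mul_inv_U_mul_M_inv (w : Rˣ) :
    F.M w * F.U * ↑F.S⁻¹ * ↑F.S⁻¹ * ↑F.U⁻¹ * F.M ↑w⁻¹ = -1 := by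
  rw [mul_assoc (F.M w * F.U : A), inv_S_mul_inv_S, mul_neg_one, neg_mul,
    Units.mul_inv_cancel_right, neg_mul, M_mul_M_inv]

theorem holonomy_mul_eq_smul_one (z12 : R) (z13 : Rˣ) (z14 z23 z24 z34 : R) :
    F.holonomy₁ z12 z13 z14 * F.holonomy₂ z12 z23 z24 * F.holonomy₃ z13 z23 z34 *
      F.holonomy₄ z13 z14 z24 z34 = (-(z12 * z13 * z14 * z23 * z24 * z34)) • (1 : A) := by
  have hcollapse : F.holonomy₁ z12 z13 z14 * F.holonomy₂ z12 z23 z24 * F.holonomy₃ z13 z23 z34 *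
      F.holonomy₄ z13 z14 z24 z34 = (z12 * z23 * z13 * z34 * z24 * z14) •
        (F.M z13 * F.U * ↑F.S⁻¹ * ↑F.S⁻¹ * ↑F.U⁻¹ * F.M ↑z13⁻¹) := by
    simp only [holonomy₁_mul_holonomy₂_mul_holonomy₃, holonomy₄, ← mul_assoc, smul_mul_assoc,
      Units.mul_inv_cancel_right, Units.inv_mul_cancel_right, mul_M_mul_S_mul_M,
      mul_U_mul_inv_S_mul_U, smul_smul]
  rw [hcollapse, M_mul_U_mul_inv_S_sq_mul_inv_U_mul_M_inv, smul_neg, ← neg_smul]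
  congr 1
  ring

end SnakeRule

theorem four_holed_sphere_closure_general {R A : Type*} [CommRing R] [Ring A] [Algebra R A]
    [FaithfulSMul R A] (F : SnakeRule R A) (z12 : R) (z13 : Rˣ) (z14 z23 z24 z34 : R) :
    F.holonomy₁ z12 z13 z14 * F.holonomy₂ z12 z23 z24 * F.holonomy₃ z13 z23 z34 *
      F.holonomy₄ z13 z14 z24 z34 = (-(z12 * z13 * z14 * z23 * z24 * z34)) • (1 : A) ∧
    (F.holonomy₁ z12 z13 z14 * F.holonomy₂ z12 z23 z24 * F.holonomy₃ z13 z23 z34 *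
      F.holonomy₄ z13 z14 z24 z34 = 1 ↔ z12 * z13 * z14 * z23 * z24 * z34 = -1) := by
  refine ⟨F.holonomy_mul_eq_smul_one .., ?_⟩
  rw [F.holonomy_mul_eq_smul_one, ← Algebra.algebraMap_eq_smul_one,
    map_eq_one_iff _ (FaithfulSMul.algebraMap_injective R A), neg_eq_iff_eq_neg]

theorem Umat_mul_Lmat : Umat * Lmat = 1 := by
  simp [Umat, Lmat, one_fin_two]

theorem isUnit_det_Smat : IsUnit Smat.det := by
  simp [Smat]

theorem inv_Smat : Smat⁻¹ = !![0, -1; 1, 0] :=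
  inv_eq_right_inv (by simp [Smat, one_fin_two])

theorem Smat_sq : Smat ^ 2 = -1 := by
  simp [Smat, sq, one_fin_two]

theorem Umat_mul_Smat_cube : (Umat * Smat) ^ 3 = -1 := by
  simp [Umat, Smat, pow_three, one_fin_two]

theorem Mdiag_mul_Smat_mul_Mdiag (w : ℂ) : Mdiag w * Smat * Mdiag w = w • Smat⁻¹ := by
  rw [inv_Smat]
  simp [Mdiag, Smat]

theorem Mdiag_mul_Mdiag_inv {w : ℂ} (hw : w ≠ 0) : Mdiag w * Mdiag w⁻¹ = 1 := by
  simp [Mdiag, one_fin_two, hw]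

/-- The snake rule given by the explicit complex `2 × 2` matrices. The inverses of the units `U` and
`S` are stored as `Lmat` and `Smat⁻¹`, so that the abstract holonomies unfold to the explicit
products. -/
noncomputable def matrixSnakeRule : SnakeRule ℂ (Matrix (Fin 2) (Fin 2) ℂ) where
  U := ⟨Umat, Lmat, Umat_mul_Lmat, mul_eq_one_comm.mp Umat_mul_Lmat⟩
  S := ⟨Smat, Smat⁻¹, mul_nonsing_inv _ isUnit_det_Smat, nonsing_inv_mul _ isUnit_det_Smat⟩
  M := Mdiag
  S_sq := Units.ext Smat_sq
  U_mul_S_cube := Units.ext Umat_mul_Smat_cube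
  M_mul_S_mul_M := Mdiag_mul_Smat_mul_Mdiag
  M_mul_M_inv w := by simpa using Mdiag_mul_Mdiag_inv w.ne_zero

/-- The snake-rule holonomies `h₁, h₂, h₃, h₄` around the four holes of a 4-holed sphere
satisfy `h₁·h₂·h₃·h₄ = −(z₁₂z₁₃z₁₄z₂₃z₂₄z₃₄)·I`; in particular the product is the identity
matrix exactly when `z₁₂z₁₃z₁₄z₂₃z₂₄z₃₄ = −1`. -/
theorem four_holed_sphere_closure (z12 z13 z14 z23 z24 z34 : ℂ)
    (h12 : z12 ≠ 0) (h13 : z13 ≠ 0) (h14 : z14 ≠ 0)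
    (h23 : z23 ≠ 0) (h24 : z24 ≠ 0) (h34 : z34 ≠ 0)
    (h1 h2 h3 h4 : Matrix (Fin 2) (Fin 2) ℂ)
    (hh1 : h1 = Mdiag z13 * Umat * Mdiag z14 * Umat * Mdiag z12 * Umat)
    (hh2 : h2 = Lmat * Smat * Mdiag z12 * Umat * Mdiag z24 * Umat * Mdiag z23 * Smat * Lmat * Smat)
    (hh3 : h3 = Smat⁻¹ * Umat * Mdiag z23 * Umat * Mdiag z34 * Umat * Mdiag z13 * Smat)
    (hh4 : h4 = Mdiag z13 * Umat * Smat⁻¹ * Umat * Mdiag z34 * Umat * Mdiag z24 * Umat *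
      Mdiag z14 * Smat⁻¹ * Lmat * Mdiag z13⁻¹) :
    h1 * h2 * h3 * h4 =
      (-(z12 * z13 * z14 * z23 * z24 * z34)) • (1 : Matrix (Fin 2) (Fin 2) ℂ) ∧
    (h1 * h2 * h3 * h4 = 1 ↔ z12 * z13 * z14 * z23 * z24 * z34 = -1) := by
  subst hh1 hh2 hh3 hh4
  exact four_holed_sphere_closure_general matrixSnakeRule z12 (.mk0 z13 h13) z14 z23 z24 z34
end

section
/- Over ℂ, let M(w) = [[1,0],[0,−w]], U = [[1,0],[1,1]], L = [[1,0],[−1,1]], S = [[0,1],[−1,0]] (so S⁻¹ = [[0,−1],[1,0]]), as 2×2 matrices. Given nonzero complex numbers z₁₂, z₁₃, z₁₄, z₂₃, z₂₄, z₃₄, define h₁ = M(z₁₃)·U·M(z₁₄)·U·M(z₁₂)·U, h₂ = L·S·M(z₁₂)·U·M(z₂₄)·U·M(z₂₃)·S·L·S, h₃ = S⁻¹·U·M(z₂₃)·U·M(z₃₄)·U·M(z₁₃)·S, h₄ = M(z₁₃)·U·S⁻¹·U·M(z₃₄)·U·M(z₂₄)·U·M(z₁₄)·S⁻¹·L·M(z₁₃⁻¹).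 Then det h₁ = −z₁₂z₁₃z₁₄, det h₂ = −z₁₂z₂₃z₂₄, det h₃ = −z₁₃z₂₃z₃₄, det h₄ = −z₁₄z₂₄z₃₄, and tr h₁ = 1 − z₁₂z₁₃z₁₄, tr h₂ = 1 − z₁₂z₂₃z₂₄, tr h₃ = 1 − z₁₃z₂₃z₃₄, tr h₄ = z₁₄z₂₄z₃₄ − 1. Consequently, for any nonzero complex numbers λ₁, λ₂, λ₃, λ₄ with λ₁² = −z₁₂z₁₃z₁₄, λ₂² = −z₁₂z₂₃z₂₄, λ₃² = −z₁₃z₂₃z₃₄, λ₄² = −z₁₄z₂₄z₃₄, the rescaled matrices λᵢ⁻¹·hᵢ have determinant 1, with tr(λᵢ⁻¹hᵢ) = λᵢ + λᵢ⁻¹ for i = 1, 2, 3 and tr(λ₄⁻¹h₄) = −(λ₄ + λ₄⁻¹). -/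
open Matrix Complex

/-!
Crossing an edge with coordinate `w` and then turning contributes the lower triangular matrix
`M(w) U`, with diagonal `(1, -w)`. A loop around a hole is a product of such factors, one for each
edge ending at the hole, so it has diagonal `(1, ∏ (-w))`. Every `hᵢ` has the form `X P Y` with
`P = M(a) U M(b) U M(c)`, and its determinant and trace are those of `P (Y X)`. The relations
`S² = -1`, `L U = 1` and `S L S L S = U` show that `Y X` is the missing turn `U` for `h₁, h₂, h₃`,
while it is `-U` for `h₄`, whence the exceptional sign of `tr h₄`.
-/

section CyclicInvariance

variable {R n : Type*} [CommRing R] [Fintype n] (X P Y : Matrix n n R)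

theorem det_mul_mul_cycle [DecidableEq n] : (X * P * Y).det = (P * (Y * X)).det := by
  rw [mul_assoc, det_mul_comm, mul_assoc]

theorem trace_mul_mul_cycle : (X * P * Y).trace = (P * (Y * X)).trace := by
  rw [mul_assoc, trace_mul_comm, mul_assoc]

end CyclicInvariance

section Rescaling

variable {K n : Type*} [Field K] [Fintype n] {A : Matrix n n K} {l : K}

theorem det_inv_smul_eq_one [DecidableEq n] (hl : l ≠ 0) (hA : A.det = l ^ Fintype.card n) :
    (l⁻¹ • A).det = 1 := by
  rw [det_smul, hA, ← mul_pow, inv_mul_cancel₀ hl, one_pow]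

theorem trace_inv_smul_eq_add_inv {p : K} (hl : l ≠ 0) (hp : l ^ 2 = -p)
    (hA : A.trace = 1 - p) : (l⁻¹ • A).trace = l + l⁻¹ := by
  rw [trace_smul, hA, sub_eq_add_neg, ← hp, smul_eq_mul, mul_add, mul_one, sq,
    inv_mul_cancel_left₀ hl, add_comm]

theorem trace_inv_smul_eq_neg_add_inv {p : K} (hl : l ≠ 0) (hp : l ^ 2 = -p)
    (hA : A.trace = p - 1) : (l⁻¹ • A).trace = -(l + l⁻¹) := by
  have trace_neg_A : (-A).trace = 1 - p := by rw [trace_neg, hA, neg_sub]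
  rw [← trace_inv_smul_eq_add_inv hl hp trace_neg_A, smul_neg, trace_neg, neg_neg]

end Rescaling

section SnakeRelations

theorem Lmat_mul_Umat : Lmat * Umat = 1 := by
  simp [Umat, Lmat, one_fin_two]

theorem Mdiag_inv_mul_Mdiag {w : ℂ} (hw : w ≠ 0) : Mdiag w⁻¹ * Mdiag w = 1 := by
  simp [Mdiag, one_fin_two, hw]

theorem Smat_mul_Smat : Smat * Smat = -1 := by
  simp [Smat, one_fin_two]

theorem Smat_inv : Smat⁻¹ = -Smat :=
  inv_eq_right_inv (by rw [mul_neg, Smat_mul_Smat, neg_neg])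

theorem hole_two_turn_eq_Umat : Smat * Lmat * Smat * (Lmat * Smat) = Umat := by
  simp [Smat, Lmat, Umat]

theorem hole_three_turn_eq_Umat : Smat * (Smat⁻¹ * Umat) = Umat := by
  rw [Smat_inv, ← mul_assoc, mul_neg, Smat_mul_Smat, neg_neg, one_mul]

theorem hole_four_turn_eq_neg_Umat {w : ℂ} (hw : w ≠ 0) :
    Smat⁻¹ * Lmat * Mdiag w⁻¹ * (Mdiag w * Umat * Smat⁻¹ * Umat) = -Umat := by
  calc Smat⁻¹ * Lmat * Mdiag w⁻¹ * (Mdiag w * Umat * Smat⁻¹ * Umat)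
      = Smat⁻¹ * (Lmat * (Mdiag w⁻¹ * Mdiag w) * Umat) * Smat⁻¹ * Umat := by
        simp only [mul_assoc]
    _ = Smat * Smat * Umat := by
        rw [Mdiag_inv_mul_Mdiag hw, mul_one, Lmat_mul_Umat, mul_one, Smat_inv, neg_mul_neg]
    _ = -Umat := by rw [Smat_mul_Smat, neg_one_mul]

end SnakeRelations

/-- The snake-rule holonomy of a loop around a single hole, which crosses the edges with
coordinates `zs` in this order (the leftmost factor belongs to the head of the list) and turns by
`Umat` after each crossing. -/
noncomputable def snakeLoop (zs : List ℂ) : Matrix (Fin 2) (Fin 2) ℂ :=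
  (zs.map fun z => Mdiag z * Umat).prod

theorem snakeLoop_cons (z : ℂ) (zs : List ℂ) :
    snakeLoop (z :: zs) = Mdiag z * Umat * snakeLoop zs := by
  rw [snakeLoop, List.map_cons, List.prod_cons, ← snakeLoop]

theorem Mdiag_mul_Umat (w : ℂ) : Mdiag w * Umat = !![1, 0; -w, -w] := by
  simp [Mdiag, Umat]

theorem exists_snakeLoop_eq_lowerTriangular (zs : List ℂ) :
    ∃ c, snakeLoop zs = !![1, 0; c, (zs.map Neg.neg).prod] := by
  induction zs with
  | nil => exact ⟨0, by simp [snakeLoop, one_fin_two]⟩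
  | cons z zs ih =>
    obtain ⟨c, hc⟩ := ih
    exact ⟨-z + -z * c, by simp [snakeLoop_cons, hc, Mdiag_mul_Umat]⟩

theorem det_snakeLoop (zs : List ℂ) : (snakeLoop zs).det = (zs.map Neg.neg).prod := by
  obtain ⟨c, hc⟩ := exists_snakeLoop_eq_lowerTriangular zs
  rw [hc, det_fin_two_of, one_mul, zero_mul, sub_zero]

theorem trace_snakeLoop (zs : List ℂ) : (snakeLoop zs).trace = 1 + (zs.map Neg.neg).prod := by
  obtain ⟨c, hc⟩ := exists_snakeLoop_eq_lowerTriangular zs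
  rw [hc, trace_fin_two_of]

section ThreeEdges

variable (a b c : ℂ)

theorem snakeLoop_triple :
    snakeLoop [a, b, c] = Mdiag a * Umat * Mdiag b * Umat * Mdiag c * Umat := by
  simp only [snakeLoop, List.map_cons, List.map_nil, List.prod_cons, List.prod_nil, mul_one,
    mul_assoc]

theorem det_snakeLoop_triple : (snakeLoop [a, b, c]).det = -(a * b * c) := by
  simp [det_snakeLoop, mul_assoc]

theorem trace_snakeLoop_triple : (snakeLoop [a, b, c]).trace = 1 - a * b * c := by
  simp [trace_snakeLoop, mul_assoc, sub_eq_add_neg]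

variable {a b c} {X Y : Matrix (Fin 2) (Fin 2) ℂ}

theorem det_of_turn_eq_Umat (turn : Y * X = Umat) :
    (X * (Mdiag a * Umat * Mdiag b * Umat * Mdiag c) * Y).det = -(a * b * c) := by
  rw [det_mul_mul_cycle, turn, ← snakeLoop_triple, det_snakeLoop_triple]

theorem trace_of_turn_eq_Umat (turn : Y * X = Umat) :
    (X * (Mdiag a * Umat * Mdiag b * Umat * Mdiag c) * Y).trace = 1 - a * b * c := by
  rw [trace_mul_mul_cycle, turn, ← snakeLoop_triple, trace_snakeLoop_triple]

theorem det_of_turn_eq_neg_Umat (turn : Y * X = -Umat) :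
    (X * (Mdiag a * Umat * Mdiag b * Umat * Mdiag c) * Y).det = -(a * b * c) := by
  rw [det_mul_mul_cycle, turn, mul_neg, det_neg, Fintype.card_fin, neg_one_sq, one_mul,
    ← snakeLoop_triple, det_snakeLoop_triple]

theorem trace_of_turn_eq_neg_Umat (turn : Y * X = -Umat) :
    (X * (Mdiag a * Umat * Mdiag b * Umat * Mdiag c) * Y).trace = a * b * c - 1 := by
  rw [trace_mul_mul_cycle, turn, mul_neg, trace_neg, ← snakeLoop_triple, trace_snakeLoop_triple,
    neg_sub]

end ThreeEdges

section Holes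

variable {z12 z13 z14 z23 z24 z34 : ℂ} {h : Matrix (Fin 2) (Fin 2) ℂ}

theorem det_and_trace_hole_one
    (hh : h = Mdiag z13 * Umat * Mdiag z14 * Umat * Mdiag z12 * Umat) :
    h.det = -(z12 * z13 * z14) ∧ h.trace = 1 - z12 * z13 * z14 := by
  rw [hh, ← snakeLoop_triple, det_snakeLoop_triple, trace_snakeLoop_triple]
  constructor <;> ring

theorem det_and_trace_hole_two
    (hh : h = Lmat * Smat * Mdiag z12 * Umat * Mdiag z24 * Umat * Mdiag z23 *
      Smat * Lmat * Smat) :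
    h.det = -(z12 * z23 * z24) ∧ h.trace = 1 - z12 * z23 * z24 := by
  have regrouped : h = Lmat * Smat * (Mdiag z12 * Umat * Mdiag z24 * Umat * Mdiag z23) *
      (Smat * Lmat * Smat) := by simp only [hh, mul_assoc]
  rw [regrouped, det_of_turn_eq_Umat hole_two_turn_eq_Umat,
    trace_of_turn_eq_Umat hole_two_turn_eq_Umat]
  constructor <;> ring

theorem det_and_trace_hole_three
    (hh : h = Smat⁻¹ * Umat * Mdiag z23 * Umat * Mdiag z34 * Umat * Mdiag z13 * Smat) :
    h.det = -(z13 * z23 * z34) ∧ h.trace = 1 - z13 * z23 * z34 := by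
  have regrouped : h = Smat⁻¹ * Umat * (Mdiag z23 * Umat * Mdiag z34 * Umat * Mdiag z13) *
      Smat := by simp only [hh, mul_assoc]
  rw [regrouped, det_of_turn_eq_Umat hole_three_turn_eq_Umat,
    trace_of_turn_eq_Umat hole_three_turn_eq_Umat]
  constructor <;> ring

theorem det_and_trace_hole_four (hz : z13 ≠ 0)
    (hh : h = Mdiag z13 * Umat * Smat⁻¹ * Umat * Mdiag z34 * Umat * Mdiag z24 * Umat *
      Mdiag z14 * Smat⁻¹ * Lmat * Mdiag z13⁻¹) :
    h.det = -(z14 * z24 * z34) ∧ h.trace = z14 * z24 * z34 - 1 := by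
  have regrouped : h = Mdiag z13 * Umat * Smat⁻¹ * Umat *
      (Mdiag z34 * Umat * Mdiag z24 * Umat * Mdiag z14) * (Smat⁻¹ * Lmat * Mdiag z13⁻¹) := by
    simp only [hh, mul_assoc]
  rw [regrouped, det_of_turn_eq_neg_Umat (hole_four_turn_eq_neg_Umat hz),
    trace_of_turn_eq_neg_Umat (hole_four_turn_eq_neg_Umat hz)]
  constructor <;> ring

end Holes

/-- Determinants and traces of the snake-rule holonomies `h₁, h₂, h₃, h₄` around the four
holes of a 4-holed sphere, and of their `SL(2,ℂ)` rescalings `λᵢ⁻¹·hᵢ` by square roots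
`λᵢ² = det hᵢ`. -/
theorem four_holed_sphere_holonomy_traces (z12 z13 z14 z23 z24 z34 : ℂ)
    (h12 : z12 ≠ 0) (h13 : z13 ≠ 0) (h14 : z14 ≠ 0)
    (h23 : z23 ≠ 0) (h24 : z24 ≠ 0) (h34 : z34 ≠ 0)
    (h1 h2 h3 h4 : Matrix (Fin 2) (Fin 2) ℂ)
    (hh1 : h1 = Mdiag z13 * Umat * Mdiag z14 * Umat * Mdiag z12 * Umat)
    (hh2 : h2 = Lmat * Smat * Mdiag z12 * Umat * Mdiag z24 * Umat * Mdiag z23 * Smat * Lmat * Smat)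
    (hh3 : h3 = Smat⁻¹ * Umat * Mdiag z23 * Umat * Mdiag z34 * Umat * Mdiag z13 * Smat)
    (hh4 : h4 = Mdiag z13 * Umat * Smat⁻¹ * Umat * Mdiag z34 * Umat * Mdiag z24 * Umat *
      Mdiag z14 * Smat⁻¹ * Lmat * Mdiag z13⁻¹) :
    h1.det = -(z12 * z13 * z14) ∧ h2.det = -(z12 * z23 * z24) ∧
    h3.det = -(z13 * z23 * z34) ∧ h4.det = -(z14 * z24 * z34) ∧
    h1.trace = 1 - z12 * z13 * z14 ∧ h2.trace = 1 - z12 * z23 * z24 ∧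
    h3.trace = 1 - z13 * z23 * z34 ∧ h4.trace = z14 * z24 * z34 - 1 ∧
    (∀ l1 l2 l3 l4 : ℂ, l1 ≠ 0 → l2 ≠ 0 → l3 ≠ 0 → l4 ≠ 0 →
      l1 ^ 2 = -(z12 * z13 * z14) → l2 ^ 2 = -(z12 * z23 * z24) →
      l3 ^ 2 = -(z13 * z23 * z34) → l4 ^ 2 = -(z14 * z24 * z34) →
      (l1⁻¹ • h1).det = 1 ∧ (l2⁻¹ • h2).det = 1 ∧
      (l3⁻¹ • h3).det = 1 ∧ (l4⁻¹ • h4).det = 1 ∧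
      (l1⁻¹ • h1).trace = l1 + l1⁻¹ ∧ (l2⁻¹ • h2).trace = l2 + l2⁻¹ ∧
      (l3⁻¹ • h3).trace = l3 + l3⁻¹ ∧ (l4⁻¹ • h4).trace = -(l4 + l4⁻¹)) := by
  obtain ⟨det1, trace1⟩ := det_and_trace_hole_one hh1
  obtain ⟨det2, trace2⟩ := det_and_trace_hole_two hh2
  obtain ⟨det3, trace3⟩ := det_and_trace_hole_three hh3
  obtain ⟨det4, trace4⟩ := det_and_trace_hole_four h13 hh4
  refine ⟨det1, det2, det3, det4, trace1, trace2, trace3, trace4, ?_⟩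
  intro l1 l2 l3 l4 n1 n2 n3 n4 e1 e2 e3 e4
  exact ⟨det_inv_smul_eq_one n1 (det1.trans e1.symm), det_inv_smul_eq_one n2 (det2.trans e2.symm),
    det_inv_smul_eq_one n3 (det3.trans e3.symm), det_inv_smul_eq_one n4 (det4.trans e4.symm),
    trace_inv_smul_eq_add_inv n1 e1 trace1, trace_inv_smul_eq_add_inv n2 e2 trace2,
    trace_inv_smul_eq_add_inv n3 e3 trace3, trace_inv_smul_eq_neg_add_inv n4 e4 trace4⟩
end

section
/- Let θ, φ be real numbers with sin θ ≠ 0, and let 𝔪₃, 𝔪₄, 𝔱₂, 𝔱₃ be real numbers. Set 𝔪₁ = 2, 𝔱₁ = 2·cos θ, and 𝔪₂ = 𝔱₁. Define c₁₂ = 𝔱₁² + 𝔪₁² + 𝔪₂² − 𝔱₁𝔪₁𝔪₂ − 4 and c₃₄ = 𝔱₁² + 𝔪₃² + 𝔪₄² − 𝔱₁𝔪₃𝔪₄ − 4. Suppose there exists a complex number r with r² = c₁₂·c₃₄ such that 2·cos φ · r = 𝔱₂·(𝔱₁² − 4) + 2·(𝔪₁𝔪₄ + 𝔪₂𝔪₃)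 − 𝔱₁·(𝔪₁𝔪₃ + 𝔪₂𝔪₄) and sin φ · r = (2𝔱₃ + 𝔱₁𝔱₂ − 𝔪₁𝔪₃ − 𝔪₂𝔪₄)·sin θ. Then c₁₂ = 0, 𝔱₂ = 𝔪₄, and 𝔱₃ = 𝔪₃, independently of φ. -/
open Real

/-!
At `𝔪₁ = 2` the coefficient `c₁₂` collapses to the square `(𝔱₁ - 𝔪₂)²`, so `𝔱₁ = 𝔪₂` kills it, and
with it the square root `r` and every occurrence of the bending angle. What remains is the
triangular linear system `(𝔱₁² - 4)(𝔱₂ - 𝔪₄) = 0`, `2(𝔱₃ - 𝔪₃) + 𝔱₁(𝔱₂ - 𝔪₄) = 0`, which is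
nonsingular because `𝔱₁² - 4 = -4 sin² θ`. Geometrically, the solution is what one reads off from
`h₁ = 1`.
-/

section Degenerate

variable {R : Type*} [CommRing R]

/-- The coefficient `cᵢⱼ` of the Darboux relations as a function of `t = tr (hᵢ hⱼ)`, `mᵢ = tr hᵢ`
and `mⱼ = tr hⱼ`. By Fricke's identity it is `tr [hᵢ, hⱼ] - 2` for `hᵢ, hⱼ` of determinant one. -/
def commutatorDefect (t mi mj : R) : R :=
  t ^ 2 + mi ^ 2 + mj ^ 2 - t * mi * mj - 4

theorem commutatorDefect_two_left (t m : R) : commutatorDefect t 2 m = (t - m) ^ 2 := by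
  unfold commutatorDefect
  ring

theorem commutatorDefect_two_self (t : R) : commutatorDefect t 2 t = 0 := by
  simp [commutatorDefect_two_left]

theorem cos_relation_two_self (t1 t2 m3 m4 : R) :
    t2 * (t1 ^ 2 - 4) + 2 * (2 * m4 + t1 * m3) - t1 * (2 * m3 + t1 * m4) =
      (t1 ^ 2 - 4) * (t2 - m4) := by
  ring

theorem sin_relation_two_self (t1 t2 t3 m3 m4 : R) :
    2 * t3 + t1 * t2 - 2 * m3 - t1 * m4 = 2 * (t3 - m3) + t1 * (t2 - m4) := by
  ring

variable [NoZeroDivisors R]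

theorem sq_sub_four_ne_zero {t s : R} (h2 : (2 : R) ≠ 0) (hs : s ≠ 0)
    (hts : t ^ 2 + 4 * s ^ 2 = 4) : t ^ 2 - 4 ≠ 0 := by
  have hfactor : t ^ 2 - 4 = -(2 * s) ^ 2 := by linear_combination hts
  rw [hfactor]
  exact neg_ne_zero.mpr (pow_ne_zero 2 (mul_ne_zero h2 hs))

/-- Here `s`, `u`, `v` stand for `sin θ`, `cos φ`, `sin φ`; the equation `hts` encodes
`t1 = 2 * cos θ`. -/
theorem trace_coordinates_degenerate_limit_general {s u v t1 t2 t3 m3 m4 r : R}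
    (h2 : (2 : R) ≠ 0) (hs : s ≠ 0) (hts : t1 ^ 2 + 4 * s ^ 2 = 4)
    (hr : r ^ 2 = commutatorDefect t1 2 t1 * commutatorDefect t1 m3 m4)
    (hcos : 2 * u * r =
      t2 * (t1 ^ 2 - 4) + 2 * (2 * m4 + t1 * m3) - t1 * (2 * m3 + t1 * m4))
    (hsin : v * r = (2 * t3 + t1 * t2 - 2 * m3 - t1 * m4) * s) :
    commutatorDefect t1 2 t1 = 0 ∧ t2 = m4 ∧ t3 = m3 := by
  have hc : commutatorDefect t1 2 t1 = 0 := commutatorDefect_two_self t1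
  have hr0 : r = 0 := by
    rw [hc, zero_mul] at hr
    exact eq_zero_of_pow_eq_zero hr
  rw [hr0, mul_zero, cos_relation_two_self] at hcos
  rw [hr0, mul_zero, sin_relation_two_self] at hsin
  have ht2 : t2 - m4 = 0 :=
    (mul_eq_zero.mp hcos.symm).resolve_left (sq_sub_four_ne_zero h2 hs hts)
  have ht3 : 2 * (t3 - m3) = 0 := by
    simpa [ht2] using (mul_eq_zero.mp hsin.symm).resolve_right hs
  exact ⟨hc, sub_eq_zero.mp ht2, sub_eq_zero.mp ((mul_eq_zero.mp ht3).resolve_left h2)⟩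

end Degenerate

/-- In the degenerate limit `𝔪₁ = 2`, `𝔱₁ = 𝔪₂ = 2cos θ` (one geodesic edge of the curved
tetrahedron shrinking to a point), the Darboux-coordinate relations force `c₁₂ = 0`,
`𝔱₂ = 𝔪₄` and `𝔱₃ = 𝔪₃`, independently of the bending angle `φ`. -/
theorem trace_coordinates_degenerate_limit (θ φ m3 m4 t2 t3 : ℝ)
    (hθ : Real.sin θ ≠ 0)
    (m1 m2 t1 c12 c34 : ℝ)
    (hm1 : m1 = 2) (ht1 : t1 = 2 * Real.cos θ) (hm2 : m2 = t1)
    (hc12 : c12 = t1 ^ 2 + m1 ^ 2 + m2 ^ 2 - t1 * m1 * m2 - 4)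
    (hc34 : c34 = t1 ^ 2 + m3 ^ 2 + m4 ^ 2 - t1 * m3 * m4 - 4)
    (r : ℂ) (hr : r ^ 2 = ((c12 : ℂ)) * ((c34 : ℂ)))
    (heq1 : ((2 * Real.cos φ : ℝ) : ℂ) * r =
      ((t2 * (t1 ^ 2 - 4) + 2 * (m1 * m4 + m2 * m3) - t1 * (m1 * m3 + m2 * m4) : ℝ) : ℂ))
    (heq2 : ((Real.sin φ : ℝ) : ℂ) * r =
      ((2 * t3 + t1 * t2 - m1 * m3 - m2 * m4 : ℝ) : ℂ) * ((Real.sin θ : ℝ) : ℂ)) :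
    c12 = 0 ∧ t2 = m4 ∧ t3 = m3 := by
  have hts : t1 ^ 2 + 4 * Real.sin θ ^ 2 = 4 := by
    rw [ht1]
    linear_combination 4 * Real.sin_sq_add_cos_sq θ
  subst hm1 hm2 hc12 hc34
  have hcomplex := trace_coordinates_degenerate_limit_general (R := ℂ) (s := Real.sin θ)
    (u := Real.cos φ) (v := Real.sin φ) (t1 := m2) (t2 := t2) (t3 := t3) (m3 := m3) (m4 := m4)
    two_ne_zero (mod_cast hθ) (mod_cast hts) (by simpa [commutatorDefect] using hr)
    (mod_cast heq1) (mod_cast heq2)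
  unfold commutatorDefect at hcomplex
  exact_mod_cast hcomplex
end

section
/- Let a₁, a₂, θ be real numbers and set 𝔪₁ = 2·cos a₁, 𝔪₂ = 2·cos a₂, 𝔱₁ = 2·cos θ, and c₁₂ = 𝔱₁² + 𝔪₁² + 𝔪₂² − 𝔱₁𝔪₁𝔪₂ − 4. Then c₁₂ = −4·(cos θ − cos(a₁ + a₂))·(cos(a₁ − a₂) − cos θ). Moreover, if a₁, a₂, θ ∈ [0, π], then c₁₂ ≤ 0 if and only if |a₁ − a₂| ≤ θ ≤ min(a₁ + a₂, 2π − (a₁ + a₂)). -/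
open Real

/-!
As a polynomial in `t = 2 cos θ`, the quantity `c₁₂` is monic quadratic with roots
`2 cos (a₁ ± a₂)`, so it is nonpositive exactly when `cos θ` lies between `cos (a₁ + a₂)` and
`cos (a₁ - a₂)`. Since `cos` is even and strictly decreasing on `[0, π]`, the upper bound on `cos θ`
says `|a₁ - a₂| ≤ θ`. Reflecting angles by `x ↦ π - x` turns the lower bound into one of the same
kind, namely `|π - (a₁ + a₂)| ≤ π - θ`.
-/

theorem cos_add_mul_cos_sub (a b : ℝ) :
    cos (a + b) * cos (a - b) = cos a ^ 2 + cos b ^ 2 - 1 := by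
  rw [cos_add, cos_sub]
  linear_combination -sin b ^ 2 * sin_sq_add_cos_sq a + (cos a ^ 2 - 1) * sin_sq_add_cos_sq b

theorem trace_quadratic_eq_mul (t a b : ℝ) :
    t ^ 2 + (2 * cos a) ^ 2 + (2 * cos b) ^ 2 - t * (2 * cos a) * (2 * cos b) - 4 =
      (t - 2 * cos (a + b)) * (t - 2 * cos (a - b)) := by
  linear_combination -2 * t * two_mul_cos_mul_cos a b - 4 * cos_add_mul_cos_sub a b

theorem cos_add_le_cos_sub {a b : ℝ} (h : 0 ≤ sin a * sin b) : cos (a + b) ≤ cos (a - b) := by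
  linarith [two_mul_sin_mul_sin a b]

theorem cos_le_cos_iff_abs_le {x θ : ℝ} (hx : |x| ≤ π) (hθ : θ ∈ Set.Icc 0 π) :
    cos θ ≤ cos x ↔ |x| ≤ θ := by
  rw [← cos_abs x, strictAntiOn_cos.le_iff_ge hθ ⟨abs_nonneg x, hx⟩]

theorem cos_le_cos_iff_le_min {s θ : ℝ} (hs : s ∈ Set.Icc 0 (2 * π)) (hθ : θ ∈ Set.Icc 0 π) :
    cos s ≤ cos θ ↔ θ ≤ min s (2 * π - s) := by
  have hs_reflect : |π - s| ≤ π := abs_le.2 ⟨by linarith [hs.2], by linarith [hs.1]⟩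
  have hθ_reflect : π - θ ∈ Set.Icc 0 π := ⟨sub_nonneg.2 hθ.2, sub_le_self π hθ.1⟩
  calc cos s ≤ cos θ ↔ cos (π - θ) ≤ cos (π - s) := by
        rw [cos_pi_sub, cos_pi_sub, neg_le_neg_iff]
    _ ↔ |π - s| ≤ π - θ := cos_le_cos_iff_abs_le hs_reflect hθ_reflect
    _ ↔ θ ≤ min s (2 * π - s) := by
        rw [abs_le, le_min_iff, and_comm]
        exact and_congr (sub_le_sub_iff_left π) (by constructor <;> intro h <;> linarith)

theorem cos_mem_Icc_cos_add_cos_sub_iff {a b θ : ℝ} (ha : a ∈ Set.Icc 0 π)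
    (hb : b ∈ Set.Icc 0 π) (hθ : θ ∈ Set.Icc 0 π) :
    cos θ ∈ Set.Icc (cos (a + b)) (cos (a - b)) ↔
      |a - b| ≤ θ ∧ θ ≤ min (a + b) (2 * π - (a + b)) := by
  have hdiff : |a - b| ≤ π := abs_le.2 ⟨by linarith [ha.1, hb.2], by linarith [ha.2, hb.1]⟩
  have hsum : a + b ∈ Set.Icc 0 (2 * π) := ⟨add_nonneg ha.1 hb.1, by linarith [ha.2, hb.2]⟩
  rw [Set.mem_Icc, cos_le_cos_iff_le_min hsum hθ, cos_le_cos_iff_abs_le hdiff hθ, and_comm]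

/-- With `𝔪₁ = 2cos a₁`, `𝔪₂ = 2cos a₂`, `𝔱₁ = 2cos θ`, the quantity
`c₁₂ = 𝔱₁² + 𝔪₁² + 𝔪₂² − 𝔱₁𝔪₁𝔪₂ − 4` factors as
`−4·(cos θ − cos(a₁+a₂))·(cos(a₁−a₂) − cos θ)`; moreover for `a₁, a₂, θ ∈ [0, π]` one has
`c₁₂ ≤ 0` iff `|a₁ − a₂| ≤ θ ≤ min(a₁+a₂, 2π − (a₁+a₂))`. -/
theorem c12_factorization_and_triangle_inequality (a1 a2 θ : ℝ)
    (m1 m2 t1 c12 : ℝ)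
    (hm1 : m1 = 2 * Real.cos a1) (hm2 : m2 = 2 * Real.cos a2)
    (ht1 : t1 = 2 * Real.cos θ)
    (hc : c12 = t1 ^ 2 + m1 ^ 2 + m2 ^ 2 - t1 * m1 * m2 - 4) :
    c12 = -4 * (Real.cos θ - Real.cos (a1 + a2)) * (Real.cos (a1 - a2) - Real.cos θ) ∧
    (a1 ∈ Set.Icc 0 π → a2 ∈ Set.Icc 0 π → θ ∈ Set.Icc 0 π →
      (c12 ≤ 0 ↔ |a1 - a2| ≤ θ ∧ θ ≤ min (a1 + a2) (2 * π - (a1 + a2)))) := by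
  have hfactor : c12 = 4 * ((cos θ - cos (a1 + a2)) * (cos θ - cos (a1 - a2))) := by
    rw [hc, hm1, hm2, ht1, trace_quadratic_eq_mul]
    ring
  refine ⟨by rw [hfactor]; ring, fun ha1 ha2 hθ => ?_⟩
  have hsin : 0 ≤ sin a1 * sin a2 :=
    mul_nonneg (sin_nonneg_of_mem_Icc ha1) (sin_nonneg_of_mem_Icc ha2)
  calc c12 ≤ 0 ↔ (cos θ - cos (a1 + a2)) * (cos θ - cos (a1 - a2)) ≤ 0 := by
        constructor <;> intro h <;> linarith
    _ ↔ cos θ ∈ Set.Icc (cos (a1 + a2)) (cos (a1 - a2)) :=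
        sub_mul_sub_nonpos_iff (cos θ) (cos_add_le_cos_sub hsin)
    _ ↔ |a1 - a2| ≤ θ ∧ θ ≤ min (a1 + a2) (2 * π - (a1 + a2)) :=
        cos_mem_Icc_cos_add_cos_sub_iff ha1 ha2 hθ
end

section
/- Let f : ℝ → ℂ be a Schwartz function, let k be a positive integer, and let α be a real number with |α| < 1/2. Then the symmetric partial sums ∑_{p=−P}^{P} e^{2πi·p·(α−1/2)} · ∫₀^{k} f(t + α − 1/2) · e^{2πi·p·t} dt converge as P → ∞, and their limit equals ∑_{n=0}^{k−1} f(n). -/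
open Real Filter

/-!
For `a < x < a + 1` one has `f t = f x + (e^{2πi(t - x)} - 1) h t` on `[a, a + 1]`, where `h` is
integrable as soon as the difference quotients of `f` at `x` are (Dini's criterion). Multiplication
by `e^{2πi(t - x)} - 1` takes successive differences of Fourier coefficients, so the symmetric
partial sums of the Fourier series of `f` at `x` telescope, up to the constant `f x`, to two Fourier
coefficients of `h`, which vanish in the limit by the Riemann–Lebesgue lemma. The resummation
formula adds up this convergence on the unit intervals around `0, 1, …, k - 1`, where the
characters `e^{2πipt}` take the value `1` at the integer points.
-/

open MeasureTheory SummationFilter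
open scoped FourierTransform Topology Interval

section Telescoping

variable {M : Type*} [AddCommGroup M] [TopologicalSpace M] [IsTopologicalAddGroup M]

theorem hasSum_symmetricIcc_succ_sub {u : ℤ → M} {b c : M} (hbot : Tendsto u atBot (𝓝 b))
    (htop : Tendsto u atTop (𝓝 c)) :
    HasSum (fun p => u (p + 1) - u p) (c - b) (symmetricIcc ℤ) := by
  have telescope (P : ℕ) :
      ∑ p ∈ Finset.Icc (-(P : ℤ)) P, (u (p + 1) - u p) = u (P + 1) - u (-P) := by
    have hIco := Finset.sum_Ico_int_sub P fun p => -u p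
    simp only [neg_sub_neg] at hIco
    rw [Finset.sum_Icc_eq_sum_Ico_add _ (by lia), hIco]
    abel
  have hsucc : Tendsto (fun P : ℕ => (P : ℤ) + 1) atTop atTop :=
    tendsto_atTop_add_const_right _ _ tendsto_natCast_atTop_atTop
  have hneg : Tendsto (fun P : ℕ => -(P : ℤ)) atTop atBot :=
    tendsto_neg_atTop_atBot.comp tendsto_natCast_atTop_atTop
  rw [hasSum_symmetricIcc_iff]
  exact ((htop.comp hsucc).sub (hbot.comp hneg)).congr fun P => (telescope P).symm

end Telescoping

section Slope

theorem continuous_dslope {𝕜 E : Type*} [NontriviallyNormedField 𝕜] [NormedAddCommGroup E]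
    [NormedSpace 𝕜 E] {f : 𝕜 → E} {x : 𝕜} (hf : Continuous f) (hx : DifferentiableAt 𝕜 f x) :
    Continuous (dslope f x) := by
  rw [← continuousOn_univ, continuousOn_dslope univ_mem]
  exact ⟨hf.continuousOn, hx⟩

variable {E : Type*} [NormedAddCommGroup E] [NormedSpace ℝ E] {f : ℝ → E} {x a b : ℝ}
  {μ : Measure ℝ} [IsLocallyFiniteMeasure μ]

theorem intervalIntegrable_slope [NullSingletonClass μ] (hf : Continuous f)
    (hx : DifferentiableAt ℝ f x) :
    IntervalIntegrable (slope f x) μ a b := by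
  have hae : dslope f x =ᵐ[μ.restrict (Ι a b)] slope f x :=
    ae_restrict_of_ae <| (Measure.ae_ne μ x).mono fun t ht => dslope_of_ne f ht
  exact ((continuous_dslope hf hx).intervalIntegrable a b).congr_ae hae

theorem intervalIntegrable_of_slope (hf : IntervalIntegrable (slope f x) μ a b) :
    IntervalIntegrable f μ a b := by
  have hsmul : IntervalIntegrable (fun t => (t - x) • slope f x t) μ a b :=
    hf.continuousOn_smul (by fun_prop)
  simpa only [sub_smul_slope, vsub_eq_sub, sub_add_cancel] using
    hsmul.add (intervalIntegrable_const (c := f x))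

end Slope

section FourierChar

theorem fourierChar_eq_one_iff {x : ℝ} : 𝐞 x = 1 ↔ ∃ n : ℤ, x = n := by
  simp_rw [fourierChar_apply', Circle.exp_eq_one, mul_comm _ (2 * π),
    mul_right_inj' two_pi_pos.ne']

theorem fourierChar_ne_one_of_abs_lt_one {x : ℝ} (hx0 : x ≠ 0) (hx : |x| < 1) : 𝐞 x ≠ 1 := by
  rw [Ne, fourierChar_eq_one_iff]
  rintro ⟨n, rfl⟩
  have hn : |n| < 1 := by exact_mod_cast hx
  exact hx0 (by simpa using Int.abs_lt_one_iff.1 hn)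

theorem coe_fourierChar_intCast_mul (p : ℤ) (t : ℝ) :
    (𝐞 (p * t) : ℂ) = Complex.exp (2 * π * Complex.I * p * t) := by
  rw [fourierChar_apply]
  push_cast
  ring_nf

theorem intervalIntegral_fourierChar_intCast_mul (p : ℤ) (a : ℝ) :
    ∫ t in a..a + 1, (𝐞 (p * t) : ℂ) = if p = 0 then 1 else 0 := by
  split_ifs with hp
  · simp [hp]
  · have hc : 2 * π * Complex.I * p ≠ 0 :=
      mul_ne_zero Complex.two_pi_I_ne_zero (Int.cast_ne_zero.2 hp)
    have periodic : 𝐞 (p * (a + 1)) = 𝐞 (p * a) := by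
      rw [mul_add, AddChar.map_add_eq_mul, mul_one, fourierChar_eq_one_iff.2 ⟨p, rfl⟩, mul_one]
    simp_rw [coe_fourierChar_intCast_mul]
    rw [integral_exp_mul_complex hc, ← coe_fourierChar_intCast_mul,
      ← coe_fourierChar_intCast_mul, periodic, sub_self, zero_div]

theorem dslope_coe_fourierChar_ne_zero {s : ℝ} (hs : |s| < 1) :
    dslope (fun t => (𝐞 t : ℂ)) 0 s ≠ 0 := by
  rcases eq_or_ne s 0 with rfl | hs0
  · simp [dslope_same, Real.deriv_fourierChar]
  · have hne : (𝐞 s : ℂ) ≠ 1 :=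
      Circle.coe_eq_one.not.2 (fourierChar_ne_one_of_abs_lt_one hs0 hs)
    simpa [dslope_of_ne _ hs0, slope_def_module, hs0, sub_eq_zero] using hne

end FourierChar

section FourierSeries

variable {E : Type*} [NormedAddCommGroup E] [NormedSpace ℂ E] {f : ℝ → E} {a b x : ℝ}
  {μ : Measure ℝ}

theorem intervalIntegral_circle_smul (z : Circle) (f : ℝ → E) (a b : ℝ) (μ : Measure ℝ) :
    ∫ t in a..b, z • f t ∂μ = z • ∫ t in a..b, f t ∂μ :=
  intervalIntegral.integral_smul (z : ℂ) f

theorem intervalIntegrable_fourierChar_smul (hf : IntervalIntegrable f μ a b) (w : ℝ) :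
    IntervalIntegrable (fun t => 𝐞 (w * t) • f t) μ a b := by
  have hcont : Continuous fun t => (𝐞 (w * t) : ℂ) := by fun_prop
  exact hf.continuousOn_smul hcont.continuousOn

theorem tendsto_intervalIntegral_fourierChar_smul_cocompact (f : ℝ → E) (a b : ℝ) :
    Tendsto (fun w : ℝ => ∫ t in a..b, 𝐞 (w * t) • f t) (cocompact ℝ) (𝓝 0) := by
  have hline := ((Real.tendsto_integral_exp_smul_cocompact ((Ι a b).indicator f)).comp
    (Homeomorph.neg ℝ).isClosedEmbedding.tendsto_cocompact).const_smul
    (if a ≤ b then 1 else -1 : ℝ)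
  rw [smul_zero] at hline
  refine hline.congr fun w => ?_
  rw [intervalIntegral.intervalIntegral_eq_integral_uIoc, ← integral_indicator measurableSet_uIoc]
  simp only [Function.comp_apply, Homeomorph.coe_neg, mul_neg, neg_neg, mul_comm _ w,
    Set.indicator_smul]

theorem exists_intervalIntegrable_eq_add_fourierChar_sub_one_smul (hx : x ∈ Set.Ioo a (a + 1))
    (hf : IntervalIntegrable (slope f x) volume a (a + 1)) :
    ∃ h : ℝ → E, IntervalIntegrable h volume a (a + 1) ∧
      ∀ t ∈ [[a, a + 1]], f t = f x + ((𝐞 (t - x) : ℂ) - 1) • h t := by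
  set q : ℝ → ℂ := dslope (fun s => (𝐞 s : ℂ)) 0
  have hq_ne : ∀ t ∈ [[a, a + 1]], q (t - x) ≠ 0 := by
    intro t ht
    rw [Set.uIcc_of_le (by linarith)] at ht
    exact dslope_coe_fourierChar_ne_zero
      (abs_lt.2 ⟨by linarith [ht.1, hx.2], by linarith [ht.2, hx.1]⟩)
  have hq_cont : Continuous q :=
    continuous_dslope (by fun_prop) Real.differentiable_fourierChar.differentiableAt
  refine ⟨fun t => (q (t - x))⁻¹ • slope f x t, hf.continuousOn_smul ?_, fun t ht => ?_⟩
  · exact (hq_cont.comp (continuous_id.sub continuous_const)).continuousOn.inv₀ hq_ne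
  · have hchar : (𝐞 (t - x) : ℂ) - 1 = (t - x) • q (t - x) := by
      simpa using (sub_smul_dslope (fun s => (𝐞 s : ℂ)) 0 (t - x)).symm
    rw [hchar, smul_assoc, smul_inv_smul₀ (hq_ne t ht), sub_smul_slope, vsub_eq_sub,
      add_sub_cancel]

theorem fourierChar_smul_intervalIntegral_succ_sub {h : ℝ → E}
    (hh : IntervalIntegrable h μ a b) (w x : ℝ) :
    𝐞 (-((w + 1) * x)) • (∫ t in a..b, 𝐞 ((w + 1) * t) • h t ∂μ) -
        𝐞 (-(w * x)) • (∫ t in a..b, 𝐞 (w * t) • h t ∂μ) =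
      𝐞 (-(w * x)) • ∫ t in a..b, 𝐞 (w * t) • ((𝐞 (t - x) : ℂ) - 1) • h t ∂μ := by
  have hchar (t : ℝ) : 𝐞 (w * t) • ((𝐞 (t - x) : ℂ) - 1) • h t =
      𝐞 (-x) • 𝐞 ((w + 1) * t) • h t - 𝐞 (w * t) • h t := by
    rw [sub_smul, one_smul, smul_sub, ← Circle.smul_def, smul_smul, smul_smul,
      ← AddChar.map_add_eq_mul, ← AddChar.map_add_eq_mul]
    ring_nf
  have hint := intervalIntegrable_fourierChar_smul hh
  have hint_smul : IntervalIntegrable (fun t => 𝐞 (-x) • 𝐞 ((w + 1) * t) • h t) μ a b :=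
    (hint (w + 1)).smul (𝐞 (-x) : ℂ)
  simp_rw [hchar]
  rw [intervalIntegral.integral_sub hint_smul (hint w), intervalIntegral_circle_smul, smul_sub,
    smul_smul, ← AddChar.map_add_eq_mul]
  ring_nf

theorem fourierChar_smul_intervalIntegral_const [CompleteSpace E] (p : ℤ) (a x : ℝ) (c : E) :
    𝐞 (-(p * x)) • ∫ t in a..a + 1, 𝐞 (p * t) • c = if p = 0 then c else 0 := by
  simp_rw [Circle.smul_def]
  rw [intervalIntegral.integral_smul_const, intervalIntegral_fourierChar_intCast_mul]
  split_ifs with hp <;> simp [hp]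

theorem hasSum_fourierChar_smul_intervalIntegral_of_slope [CompleteSpace E]
    (hx : x ∈ Set.Ioo a (a + 1)) (hf : IntervalIntegrable (slope f x) volume a (a + 1)) :
    HasSum (fun p : ℤ => 𝐞 (-(p * x)) • ∫ t in a..a + 1, 𝐞 (p * t) • f t) (f x)
      (symmetricIcc ℤ) := by
  obtain ⟨h, hh, hfh⟩ := exists_intervalIntegrable_eq_add_fourierChar_sub_one_smul hx hf
  set u : ℤ → E := fun p => 𝐞 (-(p * x)) • ∫ t in a..a + 1, 𝐞 (p * t) • h t with hu
  have hu_tendsto : Tendsto u (atBot ⊔ atTop) (𝓝 0) := by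
    rw [← Int.cofinite_eq, ← cocompact_eq_cofinite, tendsto_zero_iff_norm_tendsto_zero]
    simpa only [hu, Circle.norm_smul, Function.comp_def, norm_zero] using
      ((tendsto_intervalIntegral_fourierChar_smul_cocompact h a (a + 1)).comp
        Int.isClosedEmbedding_coe_real.tendsto_cocompact).norm
  have hcoeff (p : ℤ) : 𝐞 (-(p * x)) • ∫ t in a..a + 1, 𝐞 (p * t) • f t =
      (if p = 0 then f x else 0) + (u (p + 1) - u p) := by
    simp only [hu, Int.cast_add, Int.cast_one]
    rw [fourierChar_smul_intervalIntegral_succ_sub hh,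
      ← fourierChar_smul_intervalIntegral_const p a x, ← smul_add, ← intervalIntegral.integral_add]
    · refine congrArg _ (intervalIntegral.integral_congr fun t ht => ?_)
      simp only [hfh t ht, smul_add]
    · exact intervalIntegrable_fourierChar_smul intervalIntegrable_const p
    · exact intervalIntegrable_fourierChar_smul (hh.continuousOn_smul (by fun_prop)) p
  simp_rw [hcoeff]
  have htele := hasSum_symmetricIcc_succ_sub (hu_tendsto.mono_left le_sup_left)
    (hu_tendsto.mono_left le_sup_right)
  simpa using (hasSum_ite_eq 0 (f x) (symmetricIcc ℤ)).add htele

theorem hasSum_intervalIntegral_fourierChar_smul_of_slope [CompleteSpace E]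
    (ha : -1 < a) (ha0 : a < 0) {k : ℕ}
    (hf : ∀ n < k, IntervalIntegrable (slope f n) volume (a + n) (a + n + 1)) :
    HasSum (fun p : ℤ => ∫ t in a..a + k, 𝐞 (p * t) • f t) (∑ n ∈ Finset.range k, f n)
      (symmetricIcc ℤ) := by
  have hcell (n : ℕ) (hn : n ∈ Finset.range k) :
      HasSum (fun p : ℤ => ∫ t in a + n..a + n + 1, 𝐞 (p * t) • f t) (f n) (symmetricIcc ℤ) := by
    have hchar (p : ℤ) : 𝐞 (-(p * n)) = 1 :=
      fourierChar_eq_one_iff.2 ⟨-(p * n), by push_cast; ring⟩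
    simpa only [hchar, one_smul] using hasSum_fourierChar_smul_intervalIntegral_of_slope
      ⟨by linarith, by linarith⟩ (hf n (Finset.mem_range.1 hn))
  convert hasSum_sum hcell with p
  have hadj := intervalIntegral.sum_integral_adjacent_intervals (μ := volume)
    (f := fun t => 𝐞 (p * t) • f t) (a := fun n : ℕ => a + n) (n := k) fun n hn => by
      simpa [add_assoc] using
        intervalIntegrable_fourierChar_smul (intervalIntegrable_of_slope (hf n hn)) p
  simpa [add_assoc] using hadj.symm

theorem fourierChar_smul_intervalIntegral_comp_add_right (f : ℝ → E) (w a b : ℝ) :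
    𝐞 (w * a) • ∫ t in (0 : ℝ)..b, 𝐞 (w * t) • f (t + a) =
      ∫ t in a..a + b, 𝐞 (w * t) • f t := by
  have hshift := intervalIntegral.integral_comp_add_right (a := 0) (b := b)
    (fun t => 𝐞 (w * t) • f t) a
  rw [zero_add, add_comm b] at hshift
  rw [← hshift, ← intervalIntegral_circle_smul]
  simp_rw [smul_smul, ← AddChar.map_add_eq_mul, mul_add, add_comm (w * a)]

end FourierSeries

theorem poisson_resummation_general {E : Type*} [NormedAddCommGroup E] [NormedSpace ℂ E]
    [CompleteSpace E] (f : ℝ → E) (k : ℕ) {α : ℝ} (hα : |α| < 1 / 2)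
    (hf : ∀ n < k, IntervalIntegrable (slope f n) volume (n + α - 1 / 2) (n + α + 1 / 2)) :
    Tendsto
      (fun P : ℕ => ∑ p ∈ Finset.Icc (-(P : ℤ)) (P : ℤ),
        Complex.exp (2 * (π : ℂ) * Complex.I * (p : ℂ) * ((α : ℂ) - 1 / 2)) •
          ∫ t in (0 : ℝ)..(k : ℝ),
            Complex.exp (2 * (π : ℂ) * Complex.I * (p : ℂ) * (t : ℂ)) • f (t + α - 1 / 2))
      atTop (𝓝 (∑ n ∈ Finset.range k, f n)) := by
  obtain ⟨hα_neg, hα_pos⟩ := abs_lt.1 hα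
  have hsum : HasSum (fun p : ℤ => ∫ t in (α - 1 / 2)..(α - 1 / 2 + k), 𝐞 (p * t) • f t)
      (∑ n ∈ Finset.range k, f n) (symmetricIcc ℤ) := by
    refine hasSum_intervalIntegral_fourierChar_smul_of_slope (by linarith) (by linarith)
      fun n hn => ?_
    convert hf n hn using 1 <;> ring
  rw [hasSum_symmetricIcc_iff] at hsum
  refine hsum.congr fun P => Finset.sum_congr rfl fun p _ => ?_
  rw [← fourierChar_smul_intervalIntegral_comp_add_right]
  simp [Circle.smul_def, coe_fourierChar_intCast_mul, add_sub_assoc]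

/-- Truncated Poisson resummation: for a Schwartz function `f`, a positive integer `k`, and a
real `α` with `|α| < 1/2`, the symmetric partial sums
`∑_{p=−P}^{P} e^{2πi·p·(α−1/2)} · ∫₀^k f(t + α − 1/2)·e^{2πi·p·t} dt`
converge as `P → ∞` to `∑_{n=0}^{k−1} f(n)`. -/
theorem poisson_resummation (f : SchwartzMap ℝ ℂ) (k : ℕ) (hk : 0 < k)
    (α : ℝ) (hα : |α| < 1 / 2) :
    Tendsto
      (fun P : ℕ => ∑ p ∈ Finset.Icc (-(P : ℤ)) (P : ℤ),
        Complex.exp (2 * (π : ℂ) * Complex.I * (p : ℂ) * ((α : ℂ) - 1 / 2)) *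
          ∫ t in (0 : ℝ)..(k : ℝ),
            f (t + α - 1 / 2) * Complex.exp (2 * (π : ℂ) * Complex.I * (p : ℂ) * (t : ℂ)))
      atTop (nhds (∑ n ∈ Finset.range k, f (n : ℝ))) := by
  simpa only [smul_eq_mul, mul_comm (f _)] using poisson_resummation_general f k hα fun _ _ =>
    intervalIntegrable_slope f.continuous f.differentiableAt
end
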